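/- arXiv:1206.1349 — 2 statements merged into one kernel-verified Lean document; each statement's English description precedes it below -/
import Mathlib

section
/- Let Ω ⊂ ℝ^N be a smooth bounded domain, p : Ω → [2, ∞) continuous with p_+ < ∞, u ∈ C^{1,α}(cl Ω) with gradient Du, and set ρ(x) = |Du(x)|^{p(x)−2}. Fix exponents: t̄ > 0, and γ with N − 2t̄ < γ < N − 2 (N ≥ 3). Assume the weight bound sup_{y} ∫_Ω ρ(x)^{−t̄} |x − y|^{−γ} dx ≤ C₀ < ∞. Then there is a constant C such that for every w ∈ C_c^1(Ω), ‖w‖_{L^{2*(t̄)}(Ω)} ≤ C ( ∫_Ω ρ |Dw|² dx )^{1/2}, where 1/2*(t̄) = 1/2 − 1/N + (1/t̄)(1/2 − γ/(2N)). -/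
open MeasureTheory

/-!
Integrating `Dw` along every ray issuing from `x` and averaging over directions, polar coordinates
give `|w(x)| ≤ σ⁻¹ ∫ |Dw(y)| |x - y|^(1-n) dy`, with `σ` the area of the unit sphere. Hölder's
inequality with exponents `s` and `2t`, after multiplying and dividing by `ρ^(1/2)`, spends the
weight bound on the factor containing `ρ^(-1/2)` and leaves `|w|^s ≤ A I((ρ^(1/2) |Dw|)^s)`, where
`I` is a Riesz potential of order `l = (n - 1 - γ/(2t)) s`. The claim is then the
Hardy-Littlewood-Sobolev inequality for `I`, from `L^(2/s)` to `L^(q/s)`.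

For the latter, let `φ` and `h` have norm one in `L^a` and `L^r`, and cut the double integral of
`h(x) φ(y) |x - y|^(-l)` according to which of `h(x)^r` and `φ(y)^a` is larger. On each piece the
smaller function is bounded by a power of the larger one, and splitting its potential into a ball
(bounded by the supremum) and the complement (bounded by Hölder) gives exactly the power that makes
the remaining integral equal to `∫ φ^a` or `∫ h^r`.
-/

open Set Metric Module
open scoped ENNReal

section PolarCoordinates

variable {E : Type*} [NormedAddCommGroup E] [NormedSpace ℝ E] [FiniteDimensional ℝ E]
  [MeasurableSpace E] [BorelSpace E] [Nontrivial E] (μ : Measure E) [μ.IsAddHaarMeasure]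

lemma lintegral_eq_lintegral_toSphere {f : E → ℝ≥0∞} (hf : Measurable f) :
    ∫⁻ z, f z ∂μ = ∫⁻ θ : sphere (0 : E) 1, (∫⁻ r in Ioi (0 : ℝ),
      ENNReal.ofReal (r ^ (finrank ℝ E - 1)) * f (r • (θ : E))) ∂μ.toSphere := by
  have hpolar : Measurable fun x : sphere (0 : E) 1 × Ioi (0 : ℝ) ↦ f ((x.2 : ℝ) • (x.1 : E)) :=
    hf.comp (by fun_prop)
  calc ∫⁻ z, f z ∂μ
      = ∫⁻ z : ({0}ᶜ : Set E), f z ∂(μ.comap (↑)) := by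
        rw [lintegral_subtype_comap (measurableSet_singleton 0).compl, restrict_compl_singleton]
    _ = ∫⁻ x, f ((x.2 : ℝ) • (x.1 : E)) ∂μ.toSphere.prod (.volumeIoiPow (finrank ℝ E - 1)) := by
        rw [← μ.measurePreserving_homeomorphUnitSphereProd.lintegral_comp hpolar]
        refine lintegral_congr fun z ↦ congrArg f ?_
        rw [← homeomorphUnitSphereProd_symm_apply_coe, Homeomorph.symm_apply_apply]
    _ = _ := by
        rw [lintegral_prod _ hpolar.aemeasurable]
        refine lintegral_congr fun θ ↦ ?_
        have hray : Measurable fun r : Ioi (0 : ℝ) ↦ f ((r : ℝ) • (θ : E)) :=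
          hf.comp (by fun_prop)
        rw [Measure.volumeIoiPow, lintegral_withDensity_eq_lintegral_mul _ (by fun_prop) hray]
        exact lintegral_subtype_comap measurableSet_Ioi
          fun r : ℝ ↦ ENNReal.ofReal (r ^ (finrank ℝ E - 1)) * f (r • (θ : E))

lemma lintegral_comp_norm_sub {f : ℝ → ℝ≥0∞} (hf : Measurable f) (x : E) :
    ∫⁻ y, f ‖y - x‖ ∂μ
      = μ.toSphere univ * ∫⁻ r in Ioi (0 : ℝ), ENNReal.ofReal (r ^ (finrank ℝ E - 1)) * f r := by
  have hfn : Measurable fun z : E ↦ f ‖z‖ := hf.comp measurable_norm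
  rw [lintegral_sub_right_eq_self (fun z ↦ f ‖z‖), lintegral_eq_lintegral_toSphere μ hfn, mul_comm,
    ← lintegral_const]
  refine lintegral_congr fun θ ↦ setLIntegral_congr_fun measurableSet_Ioi fun r (hr : 0 < r) ↦ ?_
  rw [norm_smul, norm_eq_of_mem_sphere, mul_one, Real.norm_of_nonneg hr.le]

end PolarCoordinates

lemma ofReal_pow_pred_mul_rpow_neg {n : ℕ} (hn : 0 < n) {r : ℝ} (hr : 0 < r) (l : ℝ) :
    ENNReal.ofReal (r ^ (n - 1)) * ENNReal.ofReal r ^ (-l) = ENNReal.ofReal (r ^ (n - 1 - l)) := by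
  rw [ENNReal.ofReal_rpow_of_pos hr, ← ENNReal.ofReal_mul (by positivity), ← Real.rpow_natCast,
    ← Real.rpow_add hr, Nat.cast_pred hn, sub_eq_add_neg _ l]

lemma lintegral_Ioo_rpow {a R : ℝ} (ha : -1 < a) (hR : 0 < R) :
    ∫⁻ r in Ioo 0 R, ENNReal.ofReal (r ^ a) = ENNReal.ofReal (R ^ (a + 1) / (a + 1)) := by
  have hint := (intervalIntegral.integrableOn_Ioo_rpow_iff hR).2 ha
  rw [← ofReal_integral_eq_lintegral_ofReal hint
      (ae_restrict_of_forall_mem measurableSet_Ioo fun r hr ↦ Real.rpow_nonneg hr.1.le a),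
    ← integral_Ioc_eq_integral_Ioo, ← intervalIntegral.integral_of_le hR.le,
    integral_rpow (.inl ha), Real.zero_rpow (by linarith), sub_zero]

lemma lintegral_Ici_rpow {a R : ℝ} (ha : a < -1) (hR : 0 < R) :
    ∫⁻ r in Ici R, ENNReal.ofReal (r ^ a) = ENNReal.ofReal (-R ^ (a + 1) / (a + 1)) := by
  rw [← setLIntegral_congr Ioi_ae_eq_Ici, ← ofReal_integral_eq_lintegral_ofReal
      (integrableOn_Ioi_rpow_of_lt ha hR)
      (ae_restrict_of_forall_mem measurableSet_Ioi fun r hr ↦ Real.rpow_nonneg (hR.trans hr).le a),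
    integral_Ioi_rpow_of_lt ha hR]

section KernelIntegrals

variable {E : Type*} [NormedAddCommGroup E] [NormedSpace ℝ E] [FiniteDimensional ℝ E]
  [MeasurableSpace E] [BorelSpace E] [Nontrivial E] (μ : Measure E) [μ.IsAddHaarMeasure]

lemma setLIntegral_enorm_sub_rpow_neg {S : Set ℝ} (hS : MeasurableSet S) (l : ℝ) (x : E) :
    ∫⁻ y in {y | ‖y - x‖ ∈ S}, ‖y - x‖ₑ ^ (-l) ∂μ
      = μ.toSphere univ * ∫⁻ r in S ∩ Ioi 0, ENNReal.ofReal (r ^ (finrank ℝ E - 1 - l)) := by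
  have hind : Measurable (S.indicator fun r : ℝ ↦ ENNReal.ofReal r ^ (-l)) :=
    (by fun_prop : Measurable fun r : ℝ ↦ ENNReal.ofReal r ^ (-l)).indicator hS
  have hpre : MeasurableSet {y : E | ‖y - x‖ ∈ S} :=
    hS.preimage (by fun_prop : Measurable fun y ↦ ‖y - x‖)
  calc ∫⁻ y in {y | ‖y - x‖ ∈ S}, ‖y - x‖ₑ ^ (-l) ∂μ
      = ∫⁻ y, S.indicator (fun r ↦ ENNReal.ofReal r ^ (-l)) ‖y - x‖ ∂μ := by
        rw [← lintegral_indicator hpre]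
        simp only [indicator, ofReal_norm, mem_ofPred_eq]
    _ = _ := by
        rw [lintegral_comp_norm_sub μ hind, ← Measure.restrict_restrict hS,
          ← lintegral_indicator hS]
        congr 1
        refine setLIntegral_congr_fun measurableSet_Ioi fun r (hr : 0 < r) ↦ ?_
        by_cases hrS : r ∈ S <;> simp [hrS, ofReal_pow_pred_mul_rpow_neg finrank_pos hr]

lemma setLIntegral_ball_enorm_sub_rpow_neg {l : ℝ} (hl : l < finrank ℝ E) {R : ℝ} (hR : 0 < R)
    (x : E) :
    ∫⁻ y in ball x R, ‖y - x‖ₑ ^ (-l) ∂μ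
      = μ.toSphere univ * ENNReal.ofReal (finrank ℝ E - l)⁻¹ *
          ENNReal.ofReal R ^ (finrank ℝ E - l) := by
  have hball : ball x R = {y | ‖y - x‖ ∈ Iio R} := by ext y; simp [dist_eq_norm]
  rw [hball, setLIntegral_enorm_sub_rpow_neg μ measurableSet_Iio, Iio_inter_Ioi,
    lintegral_Ioo_rpow (by linarith) hR,
    show (finrank ℝ E : ℝ) - 1 - l + 1 = finrank ℝ E - l by ring, ENNReal.ofReal_rpow_of_pos hR,
    mul_assoc, ← ENNReal.ofReal_mul (inv_nonneg.2 (sub_nonneg.2 hl.le)), div_eq_inv_mul]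

lemma setLIntegral_compl_ball_enorm_sub_rpow_neg {l : ℝ} (hl : finrank ℝ E < l) {R : ℝ}
    (hR : 0 < R) (x : E) :
    ∫⁻ y in (ball x R)ᶜ, ‖y - x‖ₑ ^ (-l) ∂μ
      = μ.toSphere univ * ENNReal.ofReal (l - finrank ℝ E)⁻¹ *
          ENNReal.ofReal R ^ (finrank ℝ E - l) := by
  have hball : (ball x R)ᶜ = {y | ‖y - x‖ ∈ Ici R} := by ext y; simp [dist_eq_norm]
  rw [hball, setLIntegral_enorm_sub_rpow_neg μ measurableSet_Ici,
    inter_eq_left.2 (Ici_subset_Ioi.2 hR), lintegral_Ici_rpow (by linarith) hR,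
    show (finrank ℝ E : ℝ) - 1 - l + 1 = finrank ℝ E - l by ring, ENNReal.ofReal_rpow_of_pos hR,
    mul_assoc, ← ENNReal.ofReal_mul (inv_nonneg.2 (sub_nonneg.2 hl.le)), neg_div, ← div_neg,
    neg_sub, div_eq_inv_mul]

end KernelIntegrals

/-- The Riesz-type potential `∫ f(y) |y - x|⁻ˡ dν(y)`. With `ν` Lebesgue measure on a domain of
`ℝᴺ` it is `V_μ[f](x)` for `l = N (1 - μ)`. -/
noncomputable def rieszPotential {E : Type*} [NormedAddCommGroup E] [MeasurableSpace E]
    (ν : Measure E) (l : ℝ) (f : E → ℝ≥0∞) (x : E) : ℝ≥0∞ :=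
  ∫⁻ y, f y * ‖y - x‖ₑ ^ (-l) ∂ν

section PotentialEstimate

variable {E F : Type*} [NormedAddCommGroup E] [NormedSpace ℝ E]
  [NormedAddCommGroup F] [NormedSpace ℝ F] [CompleteSpace F] {w : E → F}

lemma enorm_le_lintegral_enorm_fderiv_ray (hw : ContDiff ℝ 1 w) (hwc : HasCompactSupport w) (x : E)
    {θ : E} (hθ : ‖θ‖ = 1) :
    ‖w x‖ₑ ≤ ∫⁻ r in Ioi (0 : ℝ), ‖fderiv ℝ w (x + r • θ)‖ₑ := by
  have hray_smooth : ContDiff ℝ 1 fun r : ℝ ↦ w (x + r • θ) := by fun_prop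
  have hray_isometry : Isometry fun r : ℝ ↦ x + r • θ := Isometry.of_dist_eq fun a b ↦ by
    rw [dist_add_left, dist_eq_norm, ← sub_smul, norm_smul, hθ, mul_one, Real.dist_eq,
      Real.norm_eq_abs]
  have hray_supp : HasCompactSupport fun r : ℝ ↦ w (x + r • θ) :=
    hwc.comp_isClosedEmbedding hray_isometry.isClosedEmbedding
  have hray_deriv (r : ℝ) :
      HasDerivAt (fun r : ℝ ↦ w (x + r • θ)) (fderiv ℝ w (x + r • θ) θ) r := by
    have hline : HasDerivAt (fun r : ℝ ↦ x + r • θ) θ r := by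
      simpa using ((hasDerivAt_id r).smul_const θ).const_add x
    exact (hw.differentiable one_ne_zero _).hasFDerivAt.comp_hasDerivAt r hline
  calc ‖w x‖ₑ = ‖∫ r in Ioi (0 : ℝ), deriv (fun r : ℝ ↦ w (x + r • θ)) r‖ₑ := by
        rw [HasCompactSupport.integral_Ioi_deriv_eq hray_smooth hray_supp, zero_smul, add_zero,
          enorm_neg]
    _ ≤ ∫⁻ r in Ioi (0 : ℝ), ‖deriv (fun r : ℝ ↦ w (x + r • θ)) r‖ₑ :=
        enorm_integral_le_lintegral_enorm _
    _ ≤ ∫⁻ r in Ioi (0 : ℝ), ‖fderiv ℝ w (x + r • θ)‖ₑ := by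
        refine lintegral_mono fun r ↦ ?_
        rw [(hray_deriv r).deriv]
        refine (ContinuousLinearMap.le_opENorm _ _).trans_eq ?_
        rw [← ofReal_norm θ, hθ, ENNReal.ofReal_one, mul_one]

variable [FiniteDimensional ℝ E] [MeasurableSpace E] [BorelSpace E] [Nontrivial E]
  (μ : Measure E) [μ.IsAddHaarMeasure]

lemma rieszPotential_finrank_sub_one {f : E → ℝ≥0∞} (hf : Measurable f) (x : E) :
    rieszPotential μ (finrank ℝ E - 1) f x
      = ∫⁻ θ : sphere (0 : E) 1, (∫⁻ r in Ioi (0 : ℝ), f (x + r • (θ : E))) ∂μ.toSphere := by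
  rw [rieszPotential, ← lintegral_add_left_eq_self _ x]
  simp only [add_sub_cancel_left]
  rw [lintegral_eq_lintegral_toSphere μ (by fun_prop)]
  refine lintegral_congr fun θ ↦ setLIntegral_congr_fun measurableSet_Ioi fun r (hr : 0 < r) ↦ ?_
  have hnorm : ‖r • (θ : E)‖ₑ = ENNReal.ofReal r := by
    rw [← ofReal_norm, norm_smul, norm_eq_of_mem_sphere, mul_one, Real.norm_of_nonneg hr.le]
  simp only [hnorm]
  rw [mul_left_comm, ofReal_pow_pred_mul_rpow_neg finrank_pos hr, sub_self, Real.rpow_zero,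
    ENNReal.ofReal_one, mul_one]

lemma enorm_le_rieszPotential_enorm_fderiv (hw : ContDiff ℝ 1 w) (hwc : HasCompactSupport w)
    (x : E) :
    ‖w x‖ₑ ≤ (μ.toSphere univ)⁻¹ * rieszPotential μ (finrank ℝ E - 1) (‖fderiv ℝ w ·‖ₑ) x := by
  have hσ : μ.toSphere univ ≠ 0 := Measure.measure_univ_ne_zero.2 μ.toSphere_ne_zero
  have hD : Measurable (‖fderiv ℝ w ·‖ₑ) := (hw.continuous_fderiv one_ne_zero).enorm.measurable
  rw [← ENNReal.div_eq_inv_mul, ENNReal.le_div_iff_mul_le (.inl hσ) (.inl (measure_ne_top _ _)),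
    rieszPotential_finrank_sub_one μ hD, ← lintegral_const]
  exact lintegral_mono fun θ ↦
    enorm_le_lintegral_enorm_fderiv_ray hw hwc x (norm_eq_of_mem_sphere θ)

end PotentialEstimate

section LintegralRpow

variable {α : Type*} [MeasurableSpace α] {ν : Measure α} {φ : α → ℝ≥0∞} {a : ℝ}

lemma ae_ne_top_of_lintegral_rpow_ne_top (ha : 0 < a) (hφ : AEMeasurable φ ν)
    (hφa : ∫⁻ y, φ y ^ a ∂ν ≠ ⊤) : ∀ᵐ y ∂ν, φ y ≠ ⊤ := by
  filter_upwards [ae_lt_top' (hφ.pow_const a) hφa] with y hy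
  exact ((ENNReal.rpow_lt_top_iff_of_pos ha).1 hy).ne

lemma exists_ae_eq_const_mul_lintegral_rpow_le_one (ha : 0 < a) (hφ : AEMeasurable φ ν)
    (hφa : ∫⁻ y, φ y ^ a ∂ν ≠ ⊤) :
    ∃ ψ : α → ℝ≥0∞, AEMeasurable ψ ν ∧ ∫⁻ y, ψ y ^ a ∂ν ≤ 1 ∧
      φ =ᵐ[ν] fun y ↦ (∫⁻ y, φ y ^ a ∂ν) ^ (1 / a) * ψ y := by
  rcases eq_or_ne (∫⁻ y, φ y ^ a ∂ν) 0 with hφ₀ | hφ₀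
  · refine ⟨0, aemeasurable_const, by simp [ha], ?_⟩
    filter_upwards [(lintegral_eq_zero_iff' (hφ.pow_const a)).1 hφ₀] with y hy
    simpa [ENNReal.rpow_eq_zero_iff_of_pos ha] using hy
  · set P := (∫⁻ y, φ y ^ a ∂ν) ^ (1 / a) with hP
    have hP₀ : P ≠ 0 := (ENNReal.rpow_pos (pos_of_ne_zero hφ₀) hφa).ne'
    have hP_top : P ≠ ⊤ := ENNReal.rpow_ne_top_of_nonneg (by positivity) hφa
    refine ⟨fun y ↦ P⁻¹ * φ y, by fun_prop, ?_, .of_forall fun y ↦ ?_⟩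
    · simp only [ENNReal.mul_rpow_of_nonneg _ _ ha.le]
      rw [lintegral_const_mul'' _ (hφ.pow_const a), ENNReal.inv_rpow, hP, ← ENNReal.rpow_mul,
        one_div_mul_cancel ha.ne', ENNReal.rpow_one, ENNReal.inv_mul_cancel hφ₀ hφa]
    · exact (ENNReal.mul_inv_cancel_left hP₀ hP_top).symm

end LintegralRpow

section TonelliSplitting

variable {E : Type*} [NormedAddCommGroup E] [SecondCountableTopology E] [MeasurableSpace E]
  [BorelSpace E] {ν : Measure E} {φ h : E → ℝ≥0∞} {l : ℝ}

lemma aemeasurable_mul_mul_enorm_sub_rpow (hh : AEMeasurable h ν) (hφ : AEMeasurable φ ν) :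
    AEMeasurable (fun z : E × E ↦ h z.1 * (φ z.2 * ‖z.2 - z.1‖ₑ ^ (-l))) (ν.prod ν) :=
  hh.comp_fst.mul (hφ.comp_snd.mul (by fun_prop))

variable [SFinite ν]

lemma lintegral_mul_rieszPotential_eq_lintegral_prod (hh : AEMeasurable h ν)
    (hφ : AEMeasurable φ ν) :
    ∫⁻ x, h x * rieszPotential ν l φ x ∂ν
      = ∫⁻ z, h z.1 * (φ z.2 * ‖z.2 - z.1‖ₑ ^ (-l)) ∂ν.prod ν := by
  rw [lintegral_prod _ (aemeasurable_mul_mul_enorm_sub_rpow hh hφ)]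
  exact lintegral_congr fun x ↦ (lintegral_const_mul'' _ (hφ.fun_mul (by fun_prop))).symm

lemma setLIntegral_prod_le_lintegral_mul_rieszPotential_restrict (hh : AEMeasurable h ν)
    (hφ : AEMeasurable φ ν) {S : Set (E × E)} (hS : NullMeasurableSet S (ν.prod ν)) :
    ∫⁻ z in S, h z.1 * (φ z.2 * ‖z.2 - z.1‖ₑ ^ (-l)) ∂ν.prod ν
      ≤ ∫⁻ x, h x * rieszPotential (ν.restrict (Prod.mk x ⁻¹' S)) l φ x ∂ν := by
  rw [← lintegral_indicator₀ hS, lintegral_prod _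
    ((aemeasurable_mul_mul_enorm_sub_rpow hh hφ).indicator₀ hS)]
  refine lintegral_mono fun x ↦ ?_
  rw [rieszPotential, ← lintegral_const_mul'' _ (hφ.restrict.fun_mul (by fun_prop))]
  exact lintegral_indicator_le (fun y ↦ h x * (φ y * ‖y - x‖ₑ ^ (-l))) (Prod.mk x ⁻¹' S)

lemma setLIntegral_prod_le_lintegral_mul_rieszPotential_restrict_swap (hh : AEMeasurable h ν)
    (hφ : AEMeasurable φ ν) {S : Set (E × E)} (hS : NullMeasurableSet S (ν.prod ν)) :
    ∫⁻ z in S, h z.1 * (φ z.2 * ‖z.2 - z.1‖ₑ ^ (-l)) ∂ν.prod ν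
      ≤ ∫⁻ y, φ y * rieszPotential (ν.restrict ((·, y) ⁻¹' S)) l h y ∂ν := by
  have hswap : MeasurePreserving Prod.swap (ν.prod ν) (ν.prod ν) := Measure.measurePreserving_swap
  refine le_of_eq_of_le ?_ (setLIntegral_prod_le_lintegral_mul_rieszPotential_restrict hφ hh
    (hS.preimage hswap.quasiMeasurePreserving))
  rw [← hswap.setLIntegral_comp_preimage_emb MeasurableEquiv.prodComm.measurableEmbedding]
  simp only [Prod.fst_swap, Prod.snd_swap, enorm_sub_rev (Prod.fst _), mul_left_comm]

lemma lintegral_mul_rieszPotential_le_add (hh : AEMeasurable h ν) (hφ : AEMeasurable φ ν) {b : ℝ}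
    (hb : 0 < b) :
    ∫⁻ x, h x * rieszPotential ν l φ x ∂ν
      ≤ ∫⁻ y, φ y * rieszPotential (ν.restrict {x | h x ≤ φ y ^ b}) l h y ∂ν
        + ∫⁻ x, h x * rieszPotential (ν.restrict {y | φ y ≤ h x ^ b⁻¹}) l φ x ∂ν := by
  have hcover : {z : E × E | h z.1 ≤ φ z.2 ^ b} ∪ {z | φ z.2 ≤ h z.1 ^ b⁻¹} = univ :=
    eq_univ_of_forall fun z ↦
      (le_total (h z.1) (φ z.2 ^ b)).imp_right (ENNReal.le_rpow_inv_iff hb).2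
  rw [lintegral_mul_rieszPotential_eq_lintegral_prod hh hφ, ← setLIntegral_univ, ← hcover]
  refine (lintegral_union_le _ _ _).trans (add_le_add ?_ ?_)
  · exact setLIntegral_prod_le_lintegral_mul_rieszPotential_restrict_swap hh hφ
      (nullMeasurableSet_le hh.comp_fst (hφ.comp_snd.pow_const b))
  · exact setLIntegral_prod_le_lintegral_mul_rieszPotential_restrict hh hφ
      (nullMeasurableSet_le hφ.comp_snd (hh.comp_fst.pow_const b⁻¹))

end TonelliSplitting

section HardyLittlewoodSobolev

variable {E : Type*} [NormedAddCommGroup E] [NormedSpace ℝ E] [FiniteDimensional ℝ E]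
  [MeasurableSpace E] [BorelSpace E] [Nontrivial E] (μ : Measure E) [μ.IsAddHaarMeasure]
  {ν : Measure E} {φ h : E → ℝ≥0∞} {a r l : ℝ}

lemma setLIntegral_ball_mul_enorm_sub_rpow_neg_le (hν : ν ≤ μ) (hl : l < finrank ℝ E) {T : ℝ≥0∞}
    (hT : ∀ᵐ y ∂ν, h y ≤ T) {R : ℝ} (hR : 0 < R) (x : E) :
    ∫⁻ y in ball x R, h y * ‖y - x‖ₑ ^ (-l) ∂ν ≤
      T * (μ.toSphere univ * ENNReal.ofReal (finrank ℝ E - l)⁻¹ *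
        ENNReal.ofReal R ^ (finrank ℝ E - l)) :=
  calc ∫⁻ y in ball x R, h y * ‖y - x‖ₑ ^ (-l) ∂ν
      ≤ ∫⁻ y in ball x R, T * ‖y - x‖ₑ ^ (-l) ∂ν := by
        refine lintegral_mono_ae (ae_restrict_of_ae ?_)
        filter_upwards [hT] with y hy
        gcongr
    _ = T * ∫⁻ y in ball x R, ‖y - x‖ₑ ^ (-l) ∂ν := lintegral_const_mul _ (by fun_prop)
    _ ≤ T * ∫⁻ y in ball x R, ‖y - x‖ₑ ^ (-l) ∂μ := by gcongr
    _ = _ := by rw [setLIntegral_ball_enorm_sub_rpow_neg μ hl hR]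

lemma setLIntegral_compl_ball_mul_enorm_sub_rpow_neg_le (hν : ν ≤ μ) {r' : ℝ}
    (hr : r.HolderConjugate r') (hl : finrank ℝ E < l * r') (hh : AEMeasurable h ν) {R : ℝ}
    (hR : 0 < R) (x : E) :
    ∫⁻ y in (ball x R)ᶜ, h y * ‖y - x‖ₑ ^ (-l) ∂ν ≤ (∫⁻ y, h y ^ r ∂ν) ^ (1 / r) *
      (μ.toSphere univ * ENNReal.ofReal (l * r' - finrank ℝ E)⁻¹ *
        ENNReal.ofReal R ^ (finrank ℝ E - l * r')) ^ (1 / r') := by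
  have hr₀ : 0 < r := hr.pos
  have hr'₀ : 0 < r' := hr.symm.pos
  calc ∫⁻ y in (ball x R)ᶜ, h y * ‖y - x‖ₑ ^ (-l) ∂ν
      ≤ (∫⁻ y in (ball x R)ᶜ, h y ^ r ∂ν) ^ (1 / r) *
          (∫⁻ y in (ball x R)ᶜ, (‖y - x‖ₑ ^ (-l)) ^ r' ∂ν) ^ (1 / r') :=
        ENNReal.lintegral_mul_le_Lp_mul_Lq _ hr hh.restrict (by fun_prop)
    _ ≤ (∫⁻ y, h y ^ r ∂ν) ^ (1 / r) *
          (∫⁻ y in (ball x R)ᶜ, ‖y - x‖ₑ ^ (-(l * r')) ∂μ) ^ (1 / r') := by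
        simp only [← ENNReal.rpow_mul, neg_mul]
        gcongr
        exact Measure.restrict_le_self
    _ = _ := by rw [setLIntegral_compl_ball_enorm_sub_rpow_neg μ hl hR]

/- The radius `R = T ^ (-r / n)` balances the contributions of `ball x R` and of its complement. -/
lemma exists_rieszPotential_le_rpow (hr : 1 < r) (hl : l < finrank ℝ E)
    (hrl : finrank ℝ E * (1 - 1 / r) < l) :
    ∃ c ≠ ⊤, ∀ ν ≤ μ, ∀ h : E → ℝ≥0∞, AEMeasurable h ν → ∫⁻ y, h y ^ r ∂ν ≤ 1 →
      ∀ T ≠ 0, T ≠ ⊤ → (∀ᵐ y ∂ν, h y ≤ T) →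
        ∀ x, rieszPotential ν l h x ≤ c * T ^ (1 - r * (1 - l / finrank ℝ E)) := by
  set n : ℝ := (finrank ℝ E : ℝ)
  have hn : 0 < n := Nat.cast_pos.2 finrank_pos
  obtain ⟨r', hr'⟩ : ∃ r', r.HolderConjugate r' := ⟨_, .conjExponent hr⟩
  have hr'₀ : 0 < r' := hr'.symm.pos
  have hr'_inv : 1 - 1 / r = 1 / r' := by
    rw [one_div, one_div, ← hr'.inv_add_inv_eq_one, add_sub_cancel_left]
  have hlr' : n < l * r' := by rwa [hr'_inv, mul_one_div, div_lt_iff₀ hr'₀] at hrl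
  refine ⟨μ.toSphere univ * ENNReal.ofReal (n - l)⁻¹ +
      (μ.toSphere univ * ENNReal.ofReal (l * r' - n)⁻¹) ^ (1 / r'), by finiteness,
    fun ν hν h hh hhr T hT₀ hT hhT x ↦ ?_⟩
  obtain ⟨R, hR, hRT⟩ : ∃ R : ℝ, 0 < R ∧ ENNReal.ofReal R = T ^ (-(r / n)) := by
    have hfin : T ^ (-(r / n)) ≠ ⊤ := ENNReal.rpow_ne_top_of_ne_zero hT₀ hT
    exact ⟨_, ENNReal.toReal_pos (ENNReal.rpow_pos (pos_of_ne_zero hT₀) hT).ne' hfin,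
      ENNReal.ofReal_toReal hfin⟩
  rw [rieszPotential, ← lintegral_add_compl _ (measurableSet_ball : MeasurableSet (ball x R)),
    add_mul]
  gcongr ?_ + ?_
  · have hexp : T * ENNReal.ofReal R ^ (n - l) = T ^ (1 - r * (1 - l / n)) := by
      have hsum : 1 - r * (1 - l / n) = 1 + -(r / n) * (n - l) := by field
      rw [hRT, ← ENNReal.rpow_mul, hsum, ENNReal.rpow_add _ _ hT₀ hT, ENNReal.rpow_one]
    refine (setLIntegral_ball_mul_enorm_sub_rpow_neg_le μ hν hl hhT hR x).trans_eq ?_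
    rw [mul_left_comm, hexp]
  · have hexp : (ENNReal.ofReal R ^ (n - l * r')) ^ (1 / r') = T ^ (1 - r * (1 - l / n)) := by
      rw [hRT, ← ENNReal.rpow_mul, ← ENNReal.rpow_mul, ← mul_assoc]
      congr 1
      calc -(r / n) * (n - l * r') * (1 / r') = r * l / n - r * (1 / r') := by field
        _ = 1 - r * (1 - l / n) := by rw [← hr'_inv]; field
    refine (setLIntegral_compl_ball_mul_enorm_sub_rpow_neg_le μ hν hr' hlr' hh hR x).trans ?_
    rw [ENNReal.mul_rpow_of_nonneg _ _ (by positivity), hexp]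
    exact mul_le_of_le_one_left' (ENNReal.rpow_le_one hhr (by positivity))

lemma exists_lintegral_mul_rieszPotential_restrict_le (ha : 1 < a) (hr : 1 < r)
    (hl : l < finrank ℝ E) (harl : 1 / a + 1 / r + l / finrank ℝ E = 2) :
    ∃ c ≠ ⊤, ∀ ν ≤ μ, ∀ φ h : E → ℝ≥0∞, AEMeasurable φ ν → AEMeasurable h ν →
      ∫⁻ y, φ y ^ a ∂ν ≤ 1 → ∫⁻ x, h x ^ r ∂ν ≤ 1 →
        ∫⁻ y, φ y * rieszPotential (ν.restrict {x | h x ≤ φ y ^ (a / r)}) l h y ∂ν ≤ c := by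
  have hn : (0 : ℝ) < finrank ℝ E := Nat.cast_pos.2 finrank_pos
  have ha_inv : 1 / a < 1 := (div_lt_one (by positivity)).2 ha
  have hrl : finrank ℝ E * (1 - 1 / r) < l := by
    rw [mul_comm, ← lt_div_iff₀ hn]
    linarith
  have hexp : 1 + a / r * (1 - r * (1 - l / finrank ℝ E)) = a := by
    rw [show l / finrank ℝ E = 2 - 1 / a - 1 / r by linarith]
    field
  obtain ⟨c, hc, hpot⟩ := exists_rieszPotential_le_rpow μ hr hl hrl
  refine ⟨c, hc, fun ν hν φ h hφ hh hφa hhr ↦ ?_⟩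
  have hφ_top := ae_ne_top_of_lintegral_rpow_ne_top (by positivity) hφ
    (hφa.trans_lt ENNReal.one_lt_top).ne
  calc ∫⁻ y, φ y * rieszPotential (ν.restrict {x | h x ≤ φ y ^ (a / r)}) l h y ∂ν
      ≤ ∫⁻ y, c * φ y ^ a ∂ν := by
        refine lintegral_mono_ae ?_
        filter_upwards [hφ_top] with y hy
        rcases eq_or_ne (φ y) 0 with hy₀ | hy₀
        · simp [hy₀]
        set T := φ y ^ (a / r) with hT
        have hT₀ : T ≠ 0 := (ENNReal.rpow_pos (pos_of_ne_zero hy₀) hy).ne'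
        have hT_top : T ≠ ⊤ := ENNReal.rpow_ne_top_of_nonneg (by positivity) hy
        have hpot_y := hpot (ν.restrict {x | h x ≤ T}) (Measure.restrict_le_self.trans hν) h
          hh.restrict ((setLIntegral_le_lintegral _ _).trans hhr) T hT₀ hT_top
          (ae_restrict_mem₀ (nullMeasurableSet_le hh aemeasurable_const)) y
        calc φ y * rieszPotential (ν.restrict {x | h x ≤ T}) l h y
            ≤ φ y * (c * T ^ (1 - r * (1 - l / finrank ℝ E))) := by gcongr
          _ = c * φ y ^ a := by
              rw [mul_left_comm, hT, ← ENNReal.rpow_mul]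
              nth_rw 1 [← ENNReal.rpow_one (φ y)]
              rw [← ENNReal.rpow_add _ _ hy₀ hy, hexp]
    _ = c * ∫⁻ y, φ y ^ a ∂ν := lintegral_const_mul' _ _ hc
    _ ≤ c := mul_le_of_le_one_right' hφa

lemma exists_lintegral_mul_rieszPotential_le_of_lintegral_rpow_le_one (ha : 1 < a) (hr : 1 < r)
    (hl : l < finrank ℝ E) (harl : 1 / a + 1 / r + l / finrank ℝ E = 2) :
    ∃ c ≠ ⊤, ∀ ν ≤ μ, ∀ φ h : E → ℝ≥0∞, AEMeasurable φ ν → AEMeasurable h ν →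
      ∫⁻ y, φ y ^ a ∂ν ≤ 1 → ∫⁻ x, h x ^ r ∂ν ≤ 1 →
        ∫⁻ x, h x * rieszPotential ν l φ x ∂ν ≤ c := by
  obtain ⟨c₁, hc₁, h₁⟩ := exists_lintegral_mul_rieszPotential_restrict_le μ ha hr hl harl
  obtain ⟨c₂, hc₂, h₂⟩ := exists_lintegral_mul_rieszPotential_restrict_le μ hr ha hl (by linarith)
  refine ⟨c₁ + c₂, by finiteness, fun ν hν φ h hφ hh hφa hhr ↦ ?_⟩
  have : SigmaFinite ν := Measure.sigmaFinite_of_le μ hν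
  refine (lintegral_mul_rieszPotential_le_add hh hφ (by positivity : 0 < a / r)).trans ?_
  rw [inv_div]
  exact add_le_add (h₁ ν hν φ h hφ hh hφa hhr) (h₂ ν hν h φ hh hφ hhr hφa)

theorem exists_lintegral_mul_rieszPotential_le (ha : 1 < a) (hr : 1 < r) (hl : l < finrank ℝ E)
    (harl : 1 / a + 1 / r + l / finrank ℝ E = 2) :
    ∃ c ≠ ⊤, ∀ ν ≤ μ, ∀ φ h : E → ℝ≥0∞, AEMeasurable φ ν → AEMeasurable h ν →
      ∫⁻ y, φ y ^ a ∂ν ≠ ⊤ → ∫⁻ x, h x ^ r ∂ν ≠ ⊤ →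
        ∫⁻ x, h x * rieszPotential ν l φ x ∂ν
          ≤ c * (∫⁻ y, φ y ^ a ∂ν) ^ (1 / a) * (∫⁻ x, h x ^ r ∂ν) ^ (1 / r) := by
  obtain ⟨c, hc, hle⟩ :=
    exists_lintegral_mul_rieszPotential_le_of_lintegral_rpow_le_one μ ha hr hl harl
  refine ⟨c, hc, fun ν hν φ h hφ hh hφa hhr ↦ ?_⟩
  obtain ⟨φ', hφ', hφ'a, hφφ'⟩ :=
    exists_ae_eq_const_mul_lintegral_rpow_le_one (by positivity) hφ hφa
  obtain ⟨h', hh', hh'r, hhh'⟩ :=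
    exists_ae_eq_const_mul_lintegral_rpow_le_one (by positivity) hh hhr
  set P := (∫⁻ y, φ y ^ a ∂ν) ^ (1 / a)
  set Q := (∫⁻ x, h x ^ r ∂ν) ^ (1 / r)
  have hP : P ≠ ⊤ := ENNReal.rpow_ne_top_of_nonneg (by positivity) hφa
  have hQ : Q ≠ ⊤ := ENNReal.rpow_ne_top_of_nonneg (by positivity) hhr
  have hscale (x : E) : rieszPotential ν l φ x = P * rieszPotential ν l φ' x := by
    rw [rieszPotential, rieszPotential, ← lintegral_const_mul' _ _ hP]
    refine lintegral_congr_ae ?_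
    filter_upwards [hφφ'] with y hy
    rw [hy, mul_assoc]
  calc ∫⁻ x, h x * rieszPotential ν l φ x ∂ν
      = ∫⁻ x, P * Q * (h' x * rieszPotential ν l φ' x) ∂ν := by
        refine lintegral_congr_ae ?_
        filter_upwards [hhh'] with x hx
        rw [hx, hscale]
        ring
    _ = P * Q * ∫⁻ x, h' x * rieszPotential ν l φ' x ∂ν :=
        lintegral_const_mul' _ _ (ENNReal.mul_ne_top hP hQ)
    _ ≤ P * Q * c := by gcongr; exact hle ν hν φ' h' hφ' hh' hφ'a hh'r
    _ = c * P * Q := by ring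

lemma rpow_le_of_le_mul_rpow_one_sub {W M : ℝ≥0∞} {θ : ℝ} (hθ : 0 < θ) (hW : W ≠ ⊤)
    (h : W ≤ M * W ^ (1 - θ)) : W ^ θ ≤ M := by
  rcases eq_or_ne W 0 with rfl | hW₀
  · simp [hθ]
  calc W ^ θ = W / W ^ (1 - θ) := by
        rw [← sub_sub_cancel 1 θ, ENNReal.rpow_sub _ _ hW₀ hW, ENNReal.rpow_one, sub_sub_cancel]
    _ ≤ M := ENNReal.div_le_of_le_mul h

/- The bilinear estimate is tested against `v ^ (b - 1)`, whose norm in the conjugate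
space of `L^b` is a power of the `L^b` norm of `v`. -/
theorem exists_lintegral_rpow_le_of_le_rieszPotential {b : ℝ} (ha : 1 < a) (hb : 1 < b)
    (hl : l < finrank ℝ E) (habl : 1 / b + 1 = 1 / a + l / finrank ℝ E) :
    ∃ c ≠ ⊤, ∀ ν ≤ μ, ∀ φ v : E → ℝ≥0∞, AEMeasurable φ ν → AEMeasurable v ν →
      ∫⁻ y, φ y ^ a ∂ν ≠ ⊤ → ∫⁻ x, v x ^ b ∂ν ≠ ⊤ → ∀ A ≠ ⊤,
        (∀ᵐ x ∂ν, v x ≤ A * rieszPotential ν l φ x) →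
          (∫⁻ x, v x ^ b ∂ν) ^ (1 / b) ≤ A * c * (∫⁻ y, φ y ^ a ∂ν) ^ (1 / a) := by
  have hb₀ : 0 < b - 1 := sub_pos.2 hb
  obtain ⟨b', hb'⟩ : ∃ b', b.HolderConjugate b' := ⟨_, .conjExponent hb⟩
  have hb'_inv : 1 / b' = 1 - 1 / b := by
    rw [one_div, one_div, ← hb'.inv_add_inv_eq_one, add_sub_cancel_left]
  obtain ⟨c, hc, hHLS⟩ := exists_lintegral_mul_rieszPotential_le μ ha hb'.symm.lt hl
    (by rw [hb'_inv]; linarith)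
  refine ⟨c, hc, fun ν hν φ v hφ hv hφa hvb A hA hvA ↦ ?_⟩
  have hv_pow (x : E) : (v x ^ (b - 1)) ^ b' = v x ^ b := by
    rw [← ENNReal.rpow_mul, hb'.sub_one_mul_conj]
  have hHLS_v := hHLS ν hν φ (fun x ↦ v x ^ (b - 1)) hφ (by fun_prop) hφa (by simpa [hv_pow])
  simp only [hv_pow, hb'_inv] at hHLS_v
  refine rpow_le_of_le_mul_rpow_one_sub (by positivity) hvb ?_
  calc ∫⁻ x, v x ^ b ∂ν
      = ∫⁻ x, v x ^ (b - 1) * v x ∂ν := by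
        refine lintegral_congr fun x ↦ ?_
        nth_rw 1 [← sub_add_cancel b 1]
        rw [ENNReal.rpow_add_of_nonneg _ _ hb₀.le zero_le_one, ENNReal.rpow_one]
    _ ≤ ∫⁻ x, A * (v x ^ (b - 1) * rieszPotential ν l φ x) ∂ν := by
        refine lintegral_mono_ae ?_
        filter_upwards [hvA] with x hx
        rw [mul_left_comm]
        gcongr
    _ = A * ∫⁻ x, v x ^ (b - 1) * rieszPotential ν l φ x ∂ν := lintegral_const_mul' _ _ hA
    _ ≤ A * (c * (∫⁻ y, φ y ^ a ∂ν) ^ (1 / a) * (∫⁻ x, v x ^ b ∂ν) ^ (1 - 1 / b)) := by gcongr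
    _ = _ := by ring

end HardyLittlewoodSobolev

section WeightedHolder

variable {E : Type*} [NormedAddCommGroup E] [MeasurableSpace E] [BorelSpace E] {ν : Measure E}
  [NullSingletonClass ν] {ρ : E → ℝ≥0∞} {t γ s : ℝ} {x : E}

lemma ae_ne_zero_of_rieszPotential_rpow_neg_ne_top (ht : 0 < t) (hρ : AEMeasurable ρ ν)
    (h : rieszPotential ν γ (fun y ↦ ρ y ^ (-t)) x ≠ ⊤) : ∀ᵐ y ∂ν, ρ y ≠ 0 := by
  filter_upwards [ae_lt_top' (by fun_prop) h, ν.ae_ne x] with y hy hyx hρy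
  have hker : ‖y - x‖ₑ ^ (-γ) ≠ 0 := by simp [ENNReal.rpow_eq_zero_iff, sub_eq_zero, hyx]
  rw [hρy, ENNReal.zero_rpow_of_neg (neg_lt_zero.2 ht), ENNReal.top_mul hker] at hy
  exact hy.false

lemma ae_pos_of_rieszPotential_ofReal_rpow_neg_ne_top {ρ : E → ℝ} (ht : 0 < t)
    (hρ : AEMeasurable ρ ν) (h : rieszPotential ν γ (fun y ↦ ENNReal.ofReal (ρ y) ^ (-t)) x ≠ ⊤) :
    ∀ᵐ y ∂ν, 0 < ρ y := by
  filter_upwards [ae_ne_zero_of_rieszPotential_rpow_neg_ne_top ht hρ.ennreal_ofReal h] with y hy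
  exact ENNReal.ofReal_pos.1 (pos_of_ne_zero hy)

/- Hölder's inequality applied to the splitting
`D |y - x|^(-d) = (ρ^(1/2) D |y - x|^(-(d - γ/(2t)))) (ρ^(-1/2) |y - x|^(-γ/(2t)))`. -/
lemma rieszPotential_rpow_le_weighted (hs : s.HolderConjugate (2 * t)) (d : ℝ)
    (hρ : AEMeasurable ρ ν) (hρ_top : ∀ᵐ y ∂ν, ρ y ≠ ⊤) (hρ_zero : ∀ᵐ y ∂ν, ρ y ≠ 0)
    {D : E → ℝ≥0∞} (hD : AEMeasurable D ν) (x : E) :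
    rieszPotential ν d D x ^ s ≤ rieszPotential ν γ (fun y ↦ ρ y ^ (-t)) x ^ (s / (2 * t)) *
      rieszPotential ν ((d - γ / (2 * t)) * s) (fun y ↦ (ρ y ^ (1 / 2 : ℝ) * D y) ^ s) x := by
  have hs₀ : 0 < s := hs.pos
  have ht : 0 < 2 * t := hs.symm.pos
  set f : E → ℝ≥0∞ := fun y ↦ ρ y ^ (1 / 2 : ℝ) * D y * ‖y - x‖ₑ ^ (-(d - γ / (2 * t)))
  set g : E → ℝ≥0∞ := fun y ↦ ρ y ^ (-(1 / 2) : ℝ) * ‖y - x‖ₑ ^ (-(γ / (2 * t)))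
  have hfg : ∀ᵐ y ∂ν, D y * ‖y - x‖ₑ ^ (-d) = (f * g) y := by
    filter_upwards [hρ_top, hρ_zero, ν.ae_ne x] with y hy_top hy_zero hyx
    have hweight : ρ y ^ (1 / 2 : ℝ) * ρ y ^ (-(1 / 2) : ℝ) = 1 := by
      rw [← ENNReal.rpow_add _ _ hy_zero hy_top, add_neg_cancel, ENNReal.rpow_zero]
    have hker : ‖y - x‖ₑ ^ (-d) =
        ‖y - x‖ₑ ^ (-(d - γ / (2 * t))) * ‖y - x‖ₑ ^ (-(γ / (2 * t))) := by
      rw [← ENNReal.rpow_add _ _ (by simpa [sub_eq_zero] using hyx) (by simp)]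
      ring_nf
    rw [hker, ← one_mul (D y * _), ← hweight, Pi.mul_apply]
    ring
  have hf_rpow (y : E) :
      f y ^ s = (ρ y ^ (1 / 2 : ℝ) * D y) ^ s * ‖y - x‖ₑ ^ (-((d - γ / (2 * t)) * s)) := by
    rw [ENNReal.mul_rpow_of_nonneg _ _ hs₀.le, ← ENNReal.rpow_mul ‖y - x‖ₑ, neg_mul]
  have hg_rpow (y : E) : g y ^ (2 * t) = ρ y ^ (-t) * ‖y - x‖ₑ ^ (-γ) := by
    rw [ENNReal.mul_rpow_of_nonneg _ _ ht.le, ← ENNReal.rpow_mul, ← ENNReal.rpow_mul, neg_mul,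
      neg_mul, div_mul_cancel₀ _ ht.ne', one_div, inv_mul_cancel_left₀ two_ne_zero]
  calc rieszPotential ν d D x ^ s
      ≤ ((∫⁻ y, f y ^ s ∂ν) ^ (1 / s) * (∫⁻ y, g y ^ (2 * t) ∂ν) ^ (1 / (2 * t))) ^ s := by
        rw [rieszPotential, lintegral_congr_ae hfg]
        gcongr
        exact ENNReal.lintegral_mul_le_Lp_mul_Lq ν hs (by fun_prop) (by fun_prop)
    _ = (∫⁻ y, g y ^ (2 * t) ∂ν) ^ (s / (2 * t)) * ∫⁻ y, f y ^ s ∂ν := by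
        rw [ENNReal.mul_rpow_of_nonneg _ _ hs₀.le, ← ENNReal.rpow_mul, ← ENNReal.rpow_mul,
          one_div_mul_cancel hs₀.ne', ENNReal.rpow_one, mul_comm, one_div_mul_eq_div]
    _ = _ := by simp only [hf_rpow, hg_rpow, rieszPotential]

end WeightedHolder

lemma toReal_lintegral_enorm_rpow {α F : Type*} [MeasurableSpace α] [NormedAddCommGroup F]
    {ν : Measure α} {f : α → F} {q : ℝ} (hf : AEStronglyMeasurable f ν) (hq₀ : 0 ≤ q) :
    (∫⁻ x, ‖f x‖ₑ ^ q ∂ν).toReal = ∫ x, ‖f x‖ ^ q ∂ν := by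
  rw [← integral_toReal (by fun_prop) (.of_forall fun x ↦ by finiteness)]
  simp only [← ENNReal.toReal_rpow, toReal_enorm]

lemma locallyIntegrableOn_rpow {X : Type*} [TopologicalSpace X] [MeasurableSpace X]
    [OpensMeasurableSpace X] [LocallyCompactSpace X] [T2Space X] {μ : Measure X}
    [IsFiniteMeasureOnCompacts μ] {Ω : Set X} (hΩ : IsOpen Ω) {f g : X → ℝ} (hf : Continuous f)
    (hf₀ : ∀ x, 0 ≤ f x) (hg : Continuous g) (hg₀ : ∀ x ∈ Ω, 0 ≤ g x) :
    LocallyIntegrableOn (fun x ↦ f x ^ g x) Ω μ := by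
  have hdom : Continuous fun x ↦ (1 + f x) ^ g x :=
    (hf.const_add 1).rpow hg fun x ↦ .inl (by linarith [hf₀ x])
  refine (locallyIntegrableOn_iff hΩ.isLocallyClosed).2 fun K hKΩ hK ↦ ?_
  have hmeas : Measurable fun x ↦ f x ^ g x := hf.measurable.pow hg.measurable
  refine (hdom.continuousOn.integrableOn_compact hK).mono' hmeas.aestronglyMeasurable ?_
  filter_upwards [ae_restrict_mem hK.measurableSet] with x hx
  rw [Real.norm_of_nonneg (Real.rpow_nonneg (hf₀ x) _)]
  exact Real.rpow_le_rpow (hf₀ x) (le_add_of_nonneg_left zero_le_one) (hg₀ x (hKΩ hx))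

lemma integrableOn_mul_norm_fderiv_sq {E F : Type*} [NormedAddCommGroup E] [NormedSpace ℝ E]
    [MeasurableSpace E] [BorelSpace E] [NormedAddCommGroup F] [NormedSpace ℝ F] {μ : Measure E}
    {Ω : Set E} {ρ : E → ℝ} (hρ : LocallyIntegrableOn ρ Ω μ) {w : E → F} (hw : ContDiff ℝ 1 w)
    (hwc : HasCompactSupport w) (hwΩ : tsupport w ⊆ Ω) :
    IntegrableOn (fun x ↦ ρ x * ‖fderiv ℝ w x‖ ^ 2) Ω μ := by
  have hD : Continuous fun x ↦ ‖fderiv ℝ w x‖ ^ 2 := by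
    have := hw.continuous_fderiv one_ne_zero
    fun_prop
  have hsupp : Function.support (fun x ↦ ρ x * ‖fderiv ℝ w x‖ ^ 2) ⊆ tsupport w := by
    refine fun x hx ↦ support_fderiv_subset ℝ fun h ↦ hx ?_
    simp only [h, norm_zero, zero_pow two_ne_zero, mul_zero]
  have hK : IntegrableOn (fun x ↦ ρ x * ‖fderiv ℝ w x‖ ^ 2) (tsupport w) μ :=
    (hρ.integrableOn_compact_subset hwΩ hwc).mul_continuousOn hD.continuousOn hwc
  exact ((integrableOn_iff_integrable_of_support_subset hsupp).1 hK).integrableOn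

section WeightedSobolev

variable {E : Type*} [NormedAddCommGroup E] [NormedSpace ℝ E] [FiniteDimensional ℝ E]
  [MeasurableSpace E] [BorelSpace E] [Nontrivial E] {F : Type*} [NormedAddCommGroup F]
  [NormedSpace ℝ F] [CompleteSpace F] {t γ q : ℝ}

lemma weighted_sobolev_exponents {n s : ℝ} (hn : 0 < n) (ht : 1 < t) (hγ : n - 2 * t < γ)
    (hq₀ : 0 < q) (hq : 1 / q = 1 / 2 - 1 / n + 1 / t * (1 / 2 - γ / (2 * n)))
    (hs : s.HolderConjugate (2 * t)) :
    1 < 2 / s ∧ 1 < q / s ∧ (n - 1 - γ / (2 * t)) * s < n ∧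
      1 / (q / s) + 1 = 1 / (2 / s) + (n - 1 - γ / (2 * t)) * s / n := by
  have hs₀ : 0 < s := hs.pos
  have hs_inv : 1 / s + 1 / (2 * t) = 1 := by
    simpa only [one_div] using hs.inv_add_inv_eq_one
  have ht_inv : 1 / (2 * t) < 1 / 2 := one_div_lt_one_div_of_lt two_pos (by linarith)
  have hγ' : (n - γ) / (2 * t) < 1 := (div_lt_one (by linarith)).2 (by linarith)
  have hs_mul : s * (1 - 1 / (2 * t)) = 1 := by
    rw [← eq_sub_of_add_eq hs_inv, mul_one_div_cancel hs₀.ne']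
  have hq' : 1 / q = 1 / 2 - (1 - (n - γ) / (2 * t)) / n := by rw [hq]; field_simp; ring
  refine ⟨(one_lt_div hs₀).2 ?_, (one_lt_div hs₀).2 ?_, ?_, ?_⟩
  · exact (one_div_lt_one_div two_pos hs₀).1 (by linarith)
  · refine (one_div_lt_one_div hq₀ hs₀).1 ?_
    have : 0 < (1 - (n - γ) / (2 * t)) / n := div_pos (by linarith) hn
    linarith
  · have : n - (n - 1 - γ / (2 * t)) * s = s * (1 - (n - γ) / (2 * t)) := by
      linear_combination -n * hs_mul
    have : 0 < s * (1 - (n - γ) / (2 * t)) := mul_pos hs₀ (by linarith)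
    linarith
  · rw [one_div_div, one_div_div, div_eq_mul_one_div s q, hq]
    field_simp
    field_simp at hs_mul
    linear_combination -n * hs_mul

lemma weighted_sobolev_exponent_pos {n : ℝ} (hn : 2 ≤ n) (ht : 0 < t) (hγ : γ < n)
    (hq : 1 / q = 1 / 2 - 1 / n + 1 / t * (1 / 2 - γ / (2 * n))) : 0 < q := by
  have hn₀ : 0 < n := two_pos.trans_le hn
  have hn_inv : 1 / n ≤ 1 / 2 := one_div_le_one_div_of_le two_pos hn
  have hγn : γ / (2 * n) < 1 / 2 := by
    rw [div_lt_iff₀ (mul_pos two_pos hn₀)]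
    linarith
  have : 0 < 1 / t * (1 / 2 - γ / (2 * n)) := mul_pos (by positivity) (sub_pos.2 hγn)
  exact one_div_pos.1 (by linarith)

lemma enorm_rpow_le_weighted_rieszPotential (μ : Measure E) [μ.IsAddHaarMeasure] {Ω : Set E}
    {ρ : E → ℝ≥0∞} {s : ℝ} (hs : s.HolderConjugate (2 * t)) (hρ : AEMeasurable ρ (μ.restrict Ω))
    (hρ_top : ∀ᵐ x ∂μ.restrict Ω, ρ x ≠ ⊤) {C₀ : ℝ≥0∞} (hC₀ : C₀ ≠ ⊤)
    (hweight : ∀ y, rieszPotential (μ.restrict Ω) γ (fun x ↦ ρ x ^ (-t)) y ≤ C₀) {w : E → F}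
    (hw : ContDiff ℝ 1 w) (hwc : HasCompactSupport w) (hwΩ : tsupport w ⊆ Ω) (x : E) :
    ‖w x‖ₑ ^ s ≤ (μ.toSphere univ)⁻¹ ^ s * C₀ ^ (s / (2 * t)) *
      rieszPotential (μ.restrict Ω) ((finrank ℝ E - 1 - γ / (2 * t)) * s)
        (fun y ↦ (ρ y ^ (1 / 2 : ℝ) * ‖fderiv ℝ w y‖ₑ) ^ s) x := by
  have hs₀ : 0 < s := hs.pos
  have ht : 0 < 2 * t := hs.symm.pos
  have hρ_zero : ∀ᵐ y ∂μ.restrict Ω, ρ y ≠ 0 :=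
    ae_ne_zero_of_rieszPotential_rpow_neg_ne_top (x := 0) (by linarith) hρ
      (ne_top_of_le_ne_top hC₀ (hweight 0))
  have hD : Measurable (‖fderiv ℝ w ·‖ₑ) := (hw.continuous_fderiv one_ne_zero).enorm.measurable
  have hrestrict : rieszPotential μ (finrank ℝ E - 1) (‖fderiv ℝ w ·‖ₑ) x =
      rieszPotential (μ.restrict Ω) (finrank ℝ E - 1) (‖fderiv ℝ w ·‖ₑ) x := by
    refine (setLIntegral_eq_of_support_subset fun y hy ↦ hwΩ <| support_fderiv_subset ℝ ?_).symm
    exact fun h ↦ hy (by simp only [h, ← ofReal_norm, norm_zero, ENNReal.ofReal_zero, zero_mul])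
  calc ‖w x‖ₑ ^ s
      ≤ ((μ.toSphere univ)⁻¹ *
          rieszPotential (μ.restrict Ω) (finrank ℝ E - 1) (‖fderiv ℝ w ·‖ₑ) x) ^ s := by
        rw [← hrestrict]
        gcongr
        exact enorm_le_rieszPotential_enorm_fderiv μ hw hwc x
    _ ≤ _ := by
        rw [ENNReal.mul_rpow_of_nonneg _ _ hs₀.le, mul_assoc]
        gcongr
        refine (rieszPotential_rpow_le_weighted (γ := γ) hs _ hρ hρ_top hρ_zero
          hD.aemeasurable x).trans ?_
        gcongr
        exact hweight x

theorem exists_lintegral_enorm_rpow_le_weighted (μ : Measure E) [μ.IsAddHaarMeasure] {Ω : Set E}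
    {ρ : E → ℝ≥0∞} (hρ : AEMeasurable ρ (μ.restrict Ω)) (hρ_top : ∀ᵐ x ∂μ.restrict Ω, ρ x ≠ ⊤)
    (ht : 1 < t) (hγ : finrank ℝ E - 2 * t < γ) {C₀ : ℝ≥0∞} (hC₀ : C₀ ≠ ⊤)
    (hweight : ∀ y, rieszPotential (μ.restrict Ω) γ (fun x ↦ ρ x ^ (-t)) y ≤ C₀) (hq₀ : 0 < q)
    (hq : 1 / q = 1 / 2 - 1 / finrank ℝ E + 1 / t * (1 / 2 - γ / (2 * finrank ℝ E))) :
    ∃ C ≠ ⊤, ∀ w : E → F, ContDiff ℝ 1 w → HasCompactSupport w → tsupport w ⊆ Ω →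
      ∫⁻ x in Ω, ρ x * ‖fderiv ℝ w x‖ₑ ^ (2 : ℝ) ∂μ ≠ ⊤ →
        (∫⁻ x in Ω, ‖w x‖ₑ ^ q ∂μ) ^ (1 / q) ≤
          C * (∫⁻ x in Ω, ρ x * ‖fderiv ℝ w x‖ₑ ^ (2 : ℝ) ∂μ) ^ (1 / 2 : ℝ) := by
  obtain ⟨s, hs⟩ : ∃ s : ℝ, s.HolderConjugate (2 * t) := ⟨_, (Real.HolderConjugate.conjExponent
    (by linarith)).symm⟩
  have hs₀ : 0 < s := hs.pos
  obtain ⟨ha, hb, hl, habl⟩ :=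
    weighted_sobolev_exponents (Nat.cast_pos.2 finrank_pos) ht hγ hq₀ hq hs
  obtain ⟨c, hc, hHLS⟩ := exists_lintegral_rpow_le_of_le_rieszPotential μ ha hb hl habl
  set A : ℝ≥0∞ := (μ.toSphere univ)⁻¹ ^ s * C₀ ^ (s / (2 * t))
  have hσ : (μ.toSphere univ)⁻¹ ≠ ⊤ :=
    ENNReal.inv_ne_top.2 (Measure.measure_univ_ne_zero.2 μ.toSphere_ne_zero)
  have hA : A ≠ ⊤ := by finiteness
  refine ⟨(A * c) ^ (1 / s), by finiteness, fun w hw hwc hwΩ hDw ↦ ?_⟩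
  have hD : Measurable (‖fderiv ℝ w ·‖ₑ) := (hw.continuous_fderiv one_ne_zero).enorm.measurable
  have hv (x : E) : (‖w x‖ₑ ^ s) ^ (q / s) = ‖w x‖ₑ ^ q := by
    rw [← ENNReal.rpow_mul, mul_div_cancel₀ _ hs₀.ne']
  have hφ (x : E) : ((ρ x ^ (1 / 2 : ℝ) * ‖fderiv ℝ w x‖ₑ) ^ s) ^ (2 / s) =
      ρ x * ‖fderiv ℝ w x‖ₑ ^ (2 : ℝ) := by
    rw [← ENNReal.rpow_mul, mul_div_cancel₀ _ hs₀.ne', ENNReal.mul_rpow_of_nonneg _ _ two_pos.le,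
      ← ENNReal.rpow_mul, one_div_mul_cancel two_ne_zero, ENNReal.rpow_one]
  have hw_meas : Measurable (‖w ·‖ₑ) := hw.continuous.enorm.measurable
  have hw_fin : ∫⁻ x in Ω, ‖w x‖ₑ ^ q ∂μ ≠ ⊤ := by
    have hLp : MemLp w (ENNReal.ofReal q) (μ.restrict Ω) :=
      (hw.continuous.memLp_of_hasCompactSupport hwc).restrict Ω
    simpa [hq₀.le] using
      (lintegral_rpow_enorm_lt_top_of_eLpNorm_lt_top (by simpa) (by simp) hLp.2).ne
  have hle := hHLS (μ.restrict Ω) Measure.restrict_le_self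
    (fun x ↦ (ρ x ^ (1 / 2 : ℝ) * ‖fderiv ℝ w x‖ₑ) ^ s) (fun x ↦ ‖w x‖ₑ ^ s)
    (((hρ.pow_const _).mul hD.aemeasurable).pow_const s)
    (hw_meas.pow_const s).aemeasurable (by simpa only [hφ]) (by simpa only [hv]) A hA
    (.of_forall (enorm_rpow_le_weighted_rieszPotential μ hs hρ hρ_top hC₀ hweight hw hwc hwΩ))
  simp only [hφ, hv] at hle
  calc (∫⁻ x in Ω, ‖w x‖ₑ ^ q ∂μ) ^ (1 / q)
      = ((∫⁻ x in Ω, ‖w x‖ₑ ^ q ∂μ) ^ (1 / (q / s))) ^ (1 / s) := by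
        rw [← ENNReal.rpow_mul]
        congr 1
        field_simp
    _ ≤ (A * c * (∫⁻ x in Ω, ρ x * ‖fderiv ℝ w x‖ₑ ^ (2 : ℝ) ∂μ) ^ (1 / (2 / s))) ^ (1 / s) := by
        gcongr
    _ = _ := by
        rw [ENNReal.mul_rpow_of_nonneg _ _ (by positivity), ← ENNReal.rpow_mul]
        congr 2
        field_simp

theorem weighted_sobolev_inequality_general (μ : Measure E) [μ.IsAddHaarMeasure] {Ω : Set E}
    {ρ : E → ℝ} (hρ : LocallyIntegrableOn ρ Ω μ) (ht : 1 < t) (hγ : finrank ℝ E - 2 * t < γ)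
    {C₀ : ℝ≥0∞} (hC₀ : C₀ ≠ ⊤)
    (hweight : ∀ y, ∫⁻ x in Ω, ENNReal.ofReal (ρ x) ^ (-t) * ‖x - y‖ₑ ^ (-γ) ∂μ ≤ C₀) (hq₀ : 0 < q)
    (hq : 1 / q = 1 / 2 - 1 / finrank ℝ E + 1 / t * (1 / 2 - γ / (2 * finrank ℝ E))) :
    ∃ C : ℝ, 0 < C ∧ ∀ w : E → F, ContDiff ℝ 1 w → HasCompactSupport w → tsupport w ⊆ Ω →
      (∫ x in Ω, ‖w x‖ ^ q ∂μ) ^ (1 / q) ≤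
        C * (∫ x in Ω, ρ x * ‖fderiv ℝ w x‖ ^ 2 ∂μ) ^ (1 / 2 : ℝ) := by
  have hρ_meas : AEMeasurable ρ (μ.restrict Ω) := hρ.aestronglyMeasurable.aemeasurable
  have hρ_pos : ∀ᵐ x ∂μ.restrict Ω, 0 < ρ x :=
    ae_pos_of_rieszPotential_ofReal_rpow_neg_ne_top (one_pos.trans ht) hρ_meas
      (ne_top_of_le_ne_top hC₀ (hweight 0))
  obtain ⟨C, hC, hsob⟩ := exists_lintegral_enorm_rpow_le_weighted (F := F) μ
    hρ_meas.ennreal_ofReal (.of_forall fun _ ↦ ENNReal.ofReal_ne_top) ht hγ hC₀ hweight hq₀ hq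
  refine ⟨C.toReal + 1, by positivity, fun w hw hwc hwΩ ↦ ?_⟩
  have hint := integrableOn_mul_norm_fderiv_sq hρ hw hwc hwΩ
  have hnonneg : ∀ᵐ x ∂μ.restrict Ω, 0 ≤ ρ x * ‖fderiv ℝ w x‖ ^ 2 := by
    filter_upwards [hρ_pos] with x hx using by positivity
  have henergy : ∫⁻ x in Ω, ENNReal.ofReal (ρ x) * ‖fderiv ℝ w x‖ₑ ^ (2 : ℝ) ∂μ =
      ENNReal.ofReal (∫ x in Ω, ρ x * ‖fderiv ℝ w x‖ ^ 2 ∂μ) := by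
    rw [ofReal_integral_eq_lintegral_ofReal hint hnonneg]
    refine lintegral_congr fun x ↦ ?_
    rw [ENNReal.ofReal_mul' (by positivity), ENNReal.ofReal_pow (norm_nonneg _), ofReal_norm,
      ENNReal.rpow_ofNat]
  have henergy_nonneg := integral_nonneg_of_ae hnonneg
  have hle := hsob w hw hwc hwΩ (henergy ▸ ENNReal.ofReal_ne_top)
  rw [henergy] at hle
  calc (∫ x in Ω, ‖w x‖ ^ q ∂μ) ^ (1 / q)
      = ((∫⁻ x in Ω, ‖w x‖ₑ ^ q ∂μ) ^ (1 / q)).toReal := by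
        rw [← ENNReal.toReal_rpow,
          toReal_lintegral_enorm_rpow hw.continuous.aestronglyMeasurable hq₀.le]
    _ ≤ (C * ENNReal.ofReal (∫ x in Ω, ρ x * ‖fderiv ℝ w x‖ ^ 2 ∂μ) ^ (1 / 2 : ℝ)).toReal :=
        ENNReal.toReal_mono (by finiteness) hle
    _ = C.toReal * (∫ x in Ω, ρ x * ‖fderiv ℝ w x‖ ^ 2 ∂μ) ^ (1 / 2 : ℝ) := by
        rw [ENNReal.toReal_mul, ← ENNReal.toReal_rpow, ENNReal.toReal_ofReal henergy_nonneg]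
    _ ≤ _ := by
        gcongr
        exact le_add_of_nonneg_right zero_le_one

end WeightedSobolev

/-- Weighted Sobolev inequality with degenerate weight `ρ = |Du|^{p(x)-2}`. -/
theorem weighted_sobolev_inequality {N : ℕ} (hN : 3 ≤ N)
    (Ω : Set (EuclideanSpace ℝ (Fin N))) (hΩo : IsOpen Ω)
    (hΩbdd : Bornology.IsBounded Ω)
    (p : EuclideanSpace ℝ (Fin N) → ℝ) (hpc : Continuous p)
    (hp2 : ∀ x ∈ Ω, 2 ≤ p x) (pp : ℝ) (hpp : ∀ x ∈ Ω, p x ≤ pp)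
    -- u ∈ C^{1,α}(cl Ω)
    (u : EuclideanSpace ℝ (Fin N) → ℝ) (hu : ContDiff ℝ 1 u)
    (α Cα : ℝ) (hα : 0 < α) (hα1 : α ≤ 1)
    (hHolder : ∀ x ∈ closure Ω, ∀ y ∈ closure Ω,
      ‖fderiv ℝ u x - fderiv ℝ u y‖ ≤ Cα * ‖x - y‖ ^ α)
    -- the weight and the exponents
    (tbar γ : ℝ) (htbar : 0 < tbar)
    (hγ₁ : (N : ℝ) - 2 * tbar < γ) (hγ₂ : γ < (N : ℝ) - 2)
    (C₀ : ℝ) (hC₀ : 0 < C₀)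
    (hweight : ∀ y : EuclideanSpace ℝ (Fin N),
      (∫⁻ x in Ω, (ENNReal.ofReal (‖fderiv ℝ u x‖ ^ (p x - 2))) ^ (-tbar)
          * (ENNReal.ofReal ‖x - y‖) ^ (-γ)) ≤ ENNReal.ofReal C₀)
    (q : ℝ) (hq : 1 / q = 1 / 2 - 1 / (N : ℝ) + (1 / tbar) * (1 / 2 - γ / (2 * N))) :
    ∃ C : ℝ, 0 < C ∧
      ∀ w : EuclideanSpace ℝ (Fin N) → ℝ, ContDiff ℝ 1 w → HasCompactSupport w →
        tsupport w ⊆ Ω →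
        (∫ x in Ω, |w x| ^ q) ^ (1 / q)
          ≤ C * (∫ x in Ω, ‖fderiv ℝ u x‖ ^ (p x - 2) * ‖fderiv ℝ w x‖ ^ 2) ^ (1 / 2 : ℝ) := by
  have : NeZero N := ⟨by omega⟩
  have hN₃ : (3 : ℝ) ≤ N := mod_cast hN
  have hρ : LocallyIntegrableOn (fun x ↦ ‖fderiv ℝ u x‖ ^ (p x - 2)) Ω :=
    locallyIntegrableOn_rpow hΩo (hu.continuous_fderiv one_ne_zero).norm (fun _ ↦ norm_nonneg _)
      (hpc.sub continuous_const) fun x hx ↦ sub_nonneg.2 (hp2 x hx)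
  have hq₀ : 0 < q := weighted_sobolev_exponent_pos (by linarith) htbar (by linarith) hq
  simp only [ofReal_norm] at hweight
  simp only [← Real.norm_eq_abs]
  exact weighted_sobolev_inequality_general volume hρ (by linarith)
    (by simpa using hγ₁) ENNReal.ofReal_ne_top hweight hq₀ (by simpa using hq)
end

section
/- Let (H, ⟨·,·⟩) be a real Hilbert space compactly embedded in L²(Ω) for a bounded domain Ω, let ‖·‖_A be a norm on H equivalent to the Hilbert norm, and let V ∈ L^∞(Ω). Then the infimum μ₁ = inf{ ‖φ‖_A² − ∫_Ω V φ² : φ ∈ H, ∫_Ω φ² = 1 } is finite and attained by some φ₁ ∈ H with ∫_Ω φ₁² = 1. -/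
open MeasureTheory

/-!
Bounded closed convex sets in a reflexive space are weakly compact, a convex lower semicontinuous
function is weakly lower semicontinuous, and a compact operator is continuous from the weak to the
norm topology on bounded sets. Hence `φ ↦ A φ ^ 2 - ∫ V φ²` is weakly lower semicontinuous on the
weakly compact set of those `φ` in a large ball with `∫ φ² = 1`, and attains its minimum there. The
ball can be chosen to contain every competitor: on the constraint set `∫ V φ²` is bounded, so a
bound on the functional bounds `A φ`, hence `‖φ‖`.
-/

section Topology

open Set

theorem continuousOn_of_continuousOn_comp_of_isCompact {α β γ : Type*} [TopologicalSpace α]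
    [TopologicalSpace β] [TopologicalSpace γ] [T2Space γ] {f : α → β} {g : β → γ} {s : Set α}
    {K : Set β} (hK : IsCompact K) (hfK : MapsTo f s K) (hg : ContinuousOn g K)
    (hg_inj : InjOn g K) (hgf : ContinuousOn (g ∘ f) s) : ContinuousOn f s := by
  have : CompactSpace K := isCompact_iff_compactSpace.1 hK
  have hemb : Topology.IsEmbedding (K.domRestrict g) :=
    (hg.domRestrict.isClosedEmbedding (injOn_iff_injective.1 hg_inj)).isEmbedding
  have hfcont : Continuous (hfK.restrict f s K) := hemb.continuous_iff.2 hgf.domRestrict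
  exact continuousOn_iff_continuous_domRestrict.2 (continuous_subtype_val.comp hfcont)

end Topology

section WeakClosedness

open Set

variable {𝕜 E : Type*} [RCLike 𝕜] [AddCommGroup E] [Module 𝕜 E] [Module ℝ E] [IsScalarTower ℝ 𝕜 E]
  [TopologicalSpace E] [IsTopologicalAddGroup E] [ContinuousSMul 𝕜 E] [LocallyConvexSpace ℝ E]

theorem isClosed_preimage_toWeakSpace_symm {s : Set E} (hs_conv : Convex ℝ s) (hs : IsClosed s) :
    IsClosed ((toWeakSpace 𝕜 E).symm ⁻¹' s) := by
  rw [← LinearEquiv.image_eq_preimage_symm, ← hs.closure_eq, hs_conv.toWeakSpace_closure 𝕜]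
  exact isClosed_closure

theorem lowerSemicontinuous_comp_toWeakSpace_symm {β : Type*} [LinearOrder β] {f : E → β}
    (hf_conv : QuasiconvexOn ℝ univ f) (hf : LowerSemicontinuous f) :
    LowerSemicontinuous (f ∘ (toWeakSpace 𝕜 E).symm) := by
  refine lowerSemicontinuous_iff_isClosed_preimage.2 fun c => ?_
  have hsublevel : Convex ℝ (f ⁻¹' Iic c) := by simpa using! hf_conv c
  exact isClosed_preimage_toWeakSpace_symm hsublevel (hf.isClosed_preimage c)

end WeakClosedness

section WeakCompactness

open Bornology NormedSpace Set

theorem surjective_inclusionInDoubleDual (𝕜 H : Type*) [RCLike 𝕜] [NormedAddCommGroup H]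
    [InnerProductSpace 𝕜 H] [CompleteSpace H] :
    Function.Surjective (inclusionInDoubleDual 𝕜 H) := by
  intro Φ
  let J := InnerProductSpace.toDual 𝕜 H
  -- The Riesz isomorphism `J` is conjugate-linear, so `Φ ∘ J` has to be conjugated.
  let g : StrongDual 𝕜 H := (starL 𝕜 : 𝕜 ≃L⋆[𝕜] 𝕜).toContinuousLinearMap.comp
    (Φ.comp J.toContinuousLinearEquiv.toContinuousLinearMap)
  refine ⟨J.symm g, ?_⟩
  ext f
  obtain ⟨y, rfl⟩ := J.surjective f
  have hg : inner 𝕜 (J.symm g) y = star (Φ (J y)) := InnerProductSpace.toDual_symm_apply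
  calc inclusionInDoubleDual 𝕜 H (J.symm g) (J y)
      = inner 𝕜 y (J.symm g) := InnerProductSpace.toDual_apply_apply
    _ = star (star (Φ (J y))) := by rw [← inner_conj_symm, hg, starRingEnd_apply]
    _ = Φ (J y) := star_star _

theorem isCompact_toWeakSpace_image {𝕜 X : Type*} [RCLike 𝕜] [NormedAddCommGroup X]
    [NormedSpace 𝕜 X] [NormedSpace ℝ X] [IsScalarTower ℝ 𝕜 X]
    (hX : Function.Surjective (inclusionInDoubleDual 𝕜 X)) {s : Set X} (hs_conv : Convex ℝ s)
    (hs : IsClosed s) (hs_bdd : IsBounded s) : IsCompact (toWeakSpace 𝕜 X '' s) := by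
  have hsurj : Function.Surjective (inclusionInDoubleDualWeak 𝕜 X) := hX
  rw [← hs.closure_eq, hs_conv.toWeakSpace_closure 𝕜]
  refine isCompact_closure_of_isBounded 𝕜 X _ ?_ (by simp [hsurj.range_eq])
  rwa [preimage_image_eq s (toWeakSpace 𝕜 X).injective]

theorem continuousOn_comp_toWeakSpace_symm_of_isCompactOperator {𝕜 X E : Type*}
    [NontriviallyNormedField 𝕜] [NormedAddCommGroup X] [NormedSpace 𝕜 X] [AddCommGroup E]
    [Module 𝕜 E] [TopologicalSpace E] [ContinuousConstSMul 𝕜 E] [SeparatingDual 𝕜 E]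
    {T : X →L[𝕜] E} (hT : IsCompactOperator T) {s : Set X} (hs : IsBounded s) :
    ContinuousOn (T ∘ (toWeakSpace 𝕜 X).symm) (toWeakSpace 𝕜 X '' s) := by
  obtain ⟨K, hK, hsK⟩ :=
    IsCompactOperator.image_subset_compact_of_bounded (f := (T : X →ₗ[𝕜] E)) hT hs
  -- `T` is weak-to-weak continuous, and on the compact set `K` the weak topology is the original.
  refine continuousOn_of_continuousOn_comp_of_isCompact (g := toWeakSpaceCLM 𝕜 E) hK ?_
    (toWeakSpaceCLM 𝕜 E).continuous.continuousOn toWeakSpaceCLM_bijective.injective.injOn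
    (WeakSpace.map T).continuous.continuousOn
  rintro _ ⟨x, hx, rfl⟩
  exact hsK ⟨x, hx, by simp⟩

end WeakCompactness

theorem continuous_seminorm_of_le_mul_norm {𝕜 X : Type*} [NormedField 𝕜]
    [SeminormedAddCommGroup X] [NormedSpace 𝕜 X] {p : Seminorm 𝕜 X} {C : ℝ}
    (hp : ∀ x, p x ≤ C * ‖x‖) : Continuous p := by
  refine Seminorm.continuous_of_le (q := C.toNNReal • normSeminorm 𝕜 X)
    (continuous_norm.const_smul C.toNNReal) fun x => (hp x).trans ?_
  exact mul_le_mul_of_nonneg_right (Real.le_coe_toNNReal C) (norm_nonneg x)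

section DirectMethod

open Bornology Set

variable {X E : Type*} [NormedAddCommGroup X] [NormedSpace ℝ X] [AddCommGroup E] [Module ℝ E]
  [TopologicalSpace E] [ContinuousConstSMul ℝ E] [SeparatingDual ℝ E]

theorem exists_isMinOn_add_comp_isCompactOperator
    (hX : Function.Surjective (NormedSpace.inclusionInDoubleDual ℝ X))
    {T : X →L[ℝ] E} (hT : IsCompactOperator T) {f : X → ℝ} (hf_conv : QuasiconvexOn ℝ univ f)
    (hf : LowerSemicontinuous f) {S : Set E} (hS : IsClosed S) {q : E → ℝ} (hq : ContinuousOn q S)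
    (hne : (T ⁻¹' S).Nonempty) (hbdd : ∀ c, IsBounded {x | T x ∈ S ∧ f x + q (T x) ≤ c}) :
    ∃ x ∈ T ⁻¹' S, IsMinOn (fun x => f x + q (T x)) (T ⁻¹' S) x := by
  set F : X → ℝ := fun x => f x + q (T x)
  obtain ⟨x₀, hx₀⟩ := hne
  obtain ⟨r, hr⟩ := (hbdd (F x₀)).subset_closedBall 0
  let e := (toWeakSpace ℝ X).symm
  let B := toWeakSpace ℝ X '' Metric.closedBall 0 r
  have hB : IsCompact B := isCompact_toWeakSpace_image hX (convex_closedBall 0 r)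
    Metric.isClosed_closedBall Metric.isBounded_closedBall
  have hTB : ContinuousOn (T ∘ e) B :=
    continuousOn_comp_toWeakSpace_symm_of_isCompactOperator hT Metric.isBounded_closedBall
  let K := B ∩ (T ∘ e) ⁻¹' S
  have hK : IsCompact K := hB.of_isClosed_subset
    (hTB.preimage_isClosed_of_isClosed hB.isClosed hS) inter_subset_left
  have hF : LowerSemicontinuousOn (F ∘ e) K :=
    ((lowerSemicontinuous_comp_toWeakSpace_symm hf_conv hf).lowerSemicontinuousOn K).add
      (hq.comp (hTB.mono inter_subset_left) fun _ hx => hx.2).lowerSemicontinuousOn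
  have mem_K {x : X} (hx : T x ∈ S) (hxx₀ : F x ≤ F x₀) : toWeakSpace ℝ X x ∈ K :=
    ⟨mem_image_of_mem _ (hr ⟨hx, hxx₀⟩), hx⟩
  obtain ⟨y, hyK, hy⟩ := hF.exists_isMinOn ⟨_, mem_K hx₀ le_rfl⟩ hK
  refine ⟨e y, hyK.2, fun x hx => ?_⟩
  obtain hxx₀ | hxx₀ := le_total (F x) (F x₀)
  · exact hy (mem_K hx hxx₀)
  · exact (hy (mem_K hx₀ le_rfl)).trans hxx₀

theorem exists_isMinOn_seminorm_sq_sub_comp_isCompactOperator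
    (hX : Function.Surjective (NormedSpace.inclusionInDoubleDual ℝ X))
    {T : X →L[ℝ] E} (hT : IsCompactOperator T) {p : Seminorm ℝ X} (hp : Continuous p)
    {c : ℝ} (hc : 0 < c) (hcp : ∀ x, c * ‖x‖ ≤ p x) {S : Set E} (hS : IsClosed S) {q : E → ℝ}
    (hq : ContinuousOn q S) (hq_bdd : BddAbove (q '' S)) (hne : (T ⁻¹' S).Nonempty) :
    ∃ x ∈ T ⁻¹' S, IsMinOn (fun x => p x ^ 2 - q (T x)) (T ⁻¹' S) x := by
  have hp_conv : ConvexOn ℝ univ fun x => p x ^ 2 := p.convexOn.pow (fun x _ => apply_nonneg p x) 2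
  simp only [sub_eq_add_neg]
  refine exists_isMinOn_add_comp_isCompactOperator (q := fun y => -q y) hX hT
    hp_conv.quasiconvexOn (hp.pow 2).lowerSemicontinuous hS hq.neg hne fun b => ?_
  obtain ⟨M, hM⟩ := hq_bdd
  refine (Metric.isBounded_closedBall (x := (0 : X)) (r := √(b + M) / c)).subset ?_
  rintro x ⟨hxS, hxb⟩
  have hqx : q (T x) ≤ M := hM (mem_image_of_mem q hxS)
  have hpx : p x ≤ √(b + M) := Real.le_sqrt_of_sq_le (by linarith)
  rw [mem_closedBall_zero_iff, le_div_iff₀' hc]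
  exact (hcp x).trans hpx

end DirectMethod

section L2

open ENNReal

variable {α : Type*} [MeasurableSpace α] {μ : Measure α}

theorem integral_sq_eq_norm_sq (f : Lp ℝ 2 μ) : ∫ x, f x ^ 2 ∂μ = ‖f‖ ^ 2 := by
  rw [← real_inner_self_eq_norm_sq, L2.inner_def]
  simp

theorem exists_forall_inner_eq_integral_mul_sq {V : α → ℝ} (hV : MemLp V ∞ μ) :
    ∃ M : Lp ℝ 2 μ →L[ℝ] Lp ℝ 2 μ, ∀ f : Lp ℝ 2 μ, inner ℝ (M f) f = ∫ x, V x * f x ^ 2 ∂μ := by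
  refine ⟨(ContinuousLinearMap.mul ℝ ℝ).holderL μ ∞ 2 2 hV.toLp, fun f => ?_⟩
  rw [L2.inner_def]
  refine integral_congr_ae ?_
  filter_upwards [(ContinuousLinearMap.mul ℝ ℝ).coeFn_holder (r := 2) hV.toLp f, hV.coeFn_toLp]
    with x hmul hVx
  simp only [ContinuousLinearMap.holderL_apply_apply, hmul, hVx, ContinuousLinearMap.mul_apply',
    RCLike.inner_apply, conj_trivial]
  ring

theorem first_eigenvalue_attained_general {X : Type*} [NormedAddCommGroup X] [NormedSpace ℝ X]
    (hX : Function.Surjective (NormedSpace.inclusionInDoubleDual ℝ X))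
    {ι : X →L[ℝ] Lp ℝ 2 μ} (hι : IsCompactOperator ι) {A : Seminorm ℝ X} (hA : Continuous A)
    {c : ℝ} (hc : 0 < c) (hcA : ∀ x, c * ‖x‖ ≤ A x) {V : α → ℝ} (hV : MemLp V ∞ μ)
    (hne : ∃ φ, ∫ x, ι φ x ^ 2 ∂μ = 1) :
    ∃ φ₁, ∫ x, ι φ₁ x ^ 2 ∂μ = 1 ∧ ∀ φ, ∫ x, ι φ x ^ 2 ∂μ = 1 →
      A φ₁ ^ 2 - ∫ x, V x * ι φ₁ x ^ 2 ∂μ ≤ A φ ^ 2 - ∫ x, V x * ι φ x ^ 2 ∂μ := by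
  obtain ⟨M, hM⟩ := exists_forall_inner_eq_integral_mul_sq hV
  have mem_sphere (φ : X) : ∫ x, ι φ x ^ 2 ∂μ = 1 ↔ ι φ ∈ Metric.sphere 0 1 := by
    rw [integral_sq_eq_norm_sq, mem_sphere_zero_iff_norm,
      pow_eq_one_iff_of_nonneg (norm_nonneg _) two_ne_zero]
  have hM_bdd : BddAbove ((fun f => inner ℝ (M f) f) '' Metric.sphere 0 1) := by
    refine ⟨‖M‖, ?_⟩
    rintro _ ⟨f, hf, rfl⟩
    rw [mem_sphere_zero_iff_norm] at hf
    calc inner ℝ (M f) f ≤ ‖M f‖ * ‖f‖ := real_inner_le_norm _ _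
      _ ≤ ‖M‖ := by simpa [hf] using M.le_opNorm f
  simp only [mem_sphere, ← hM] at hne ⊢
  exact exists_isMinOn_seminorm_sq_sub_comp_isCompactOperator hX hι hA hc hcA Metric.isClosed_sphere
    (by fun_prop) hM_bdd hne

end L2

/-- Existence of a first eigenfunction: in a Hilbert space `H` compactly embedded
in `L²(Ω)`, with an equivalent norm `A` and a bounded potential `V`, the infimum
`μ₁ = inf { A(φ)² − ∫_Ω V φ² : ∫_Ω φ² = 1 }` is attained. -/
theorem first_eigenvalue_attained {N : ℕ}
    (Ω : Set (EuclideanSpace ℝ (Fin N))) (hΩ : MeasurableSet Ω)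
    (hΩfin : volume Ω < ⊤)
    {H : Type*} [NormedAddCommGroup H] [InnerProductSpace ℝ H] [CompleteSpace H]
    -- the embedding of H into L²(Ω), assumed compact
    (ι : H →L[ℝ] (Lp ℝ 2 (volume.restrict Ω)))
    (hι : IsCompactOperator ι)
    -- an equivalent norm ‖·‖_A on H
    (A : H → ℝ)
    (hA_add : ∀ x y : H, A (x + y) ≤ A x + A y)
    (hA_smul : ∀ (c : ℝ) (x : H), A (c • x) = |c| * A x)
    (c₁ c₂ : ℝ) (hc₁ : 0 < c₁) (hc₂ : 0 < c₂)
    (hA_equiv : ∀ x : H, c₁ * ‖x‖ ≤ A x ∧ A x ≤ c₂ * ‖x‖)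
    -- a bounded measurable potential V
    (V : EuclideanSpace ℝ (Fin N) → ℝ) (hVmeas : Measurable V)
    (CV : ℝ) (hV : ∀ x, |V x| ≤ CV)
    -- the constraint set is nonempty
    (hne : ∃ φ : H, ∫ x in Ω, (ι φ : EuclideanSpace ℝ (Fin N) → ℝ) x ^ 2 = 1) :
    ∃ φ₁ : H, (∫ x in Ω, (ι φ₁ : EuclideanSpace ℝ (Fin N) → ℝ) x ^ 2 = 1) ∧
      ∀ φ : H, (∫ x in Ω, (ι φ : EuclideanSpace ℝ (Fin N) → ℝ) x ^ 2 = 1) →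
        A φ₁ ^ 2 - ∫ x in Ω, V x * (ι φ₁ : EuclideanSpace ℝ (Fin N) → ℝ) x ^ 2
          ≤ A φ ^ 2 - ∫ x in Ω, V x * (ι φ : EuclideanSpace ℝ (Fin N) → ℝ) x ^ 2 := by
  exact first_eigenvalue_attained_general (A := .of A hA_add hA_smul)
    (surjective_inclusionInDoubleDual ℝ H) hι
    (continuous_seminorm_of_le_mul_norm fun x => (hA_equiv x).2) hc₁ (fun x => (hA_equiv x).1)
    (memLp_top_of_bound hVmeas.aestronglyMeasurable CV (ae_of_all _ hV)) hne
end
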